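/- Assume f satisfies (f1) and (f2), let α* ∈ G_k, and let α₁ < α₂ lie in (α*−δ₁, α*+δ₁), with δ₁ as in the δ₁-lemma. For j = 1,2 let r_j(s) := r(s,α_j) be the inverse of u_j := u(·,α_j) on a decreasing branch whose values cover [−β,β], and W_j(s) := r_j(s)·√((u_j'(r_j(s)))² + 2F(s)). If there exists U ∈ [−β,β] such that r₁(U) ≥ r₂(U) and W₁(U) < W₂(U), then r₁(s) > r₂(s) and W₁(s) < W₂(s) for all s ∈ [−β, U). -/

import Mathlib

open Set Filter MeasureTheory

namespace Paper

noncomputable section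

/-- `F s = ∫₀ˢ f t dt`. -/
def Fint (f : ℝ → ℝ) (s : ℝ) : ℝ := ∫ t in (0:ℝ)..s, f t

/-- Hypothesis (f1): `f` is odd, `f 0 = 0`, there are `β > b > 0` with `f > 0` on `(b,∞)`,
`f ≤ 0`, `f ≢ 0` on `[0,b]`, and `F β = 0`. -/
def Hf1 (f : ℝ → ℝ) (b β : ℝ) : Prop :=
  (∀ s, f (-s) = -f s) ∧ f 0 = 0 ∧ 0 < b ∧ b < β ∧
    (∀ s, b < s → 0 < f s) ∧ (∀ s ∈ Icc (0:ℝ) b, f s ≤ 0) ∧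
    (∃ s ∈ Icc (0:ℝ) b, f s ≠ 0) ∧ Fint f β = 0

/-- Hypothesis (f2): `f` continuous on `[0,∞)`, C¹ on `(0,∞)`, `f' ∈ L¹(0,1)`. -/
def Hf2 (f : ℝ → ℝ) : Prop :=
  ContinuousOn f (Ici 0) ∧ (∀ s : ℝ, 0 < s → DifferentiableAt ℝ f s) ∧
    ContinuousOn (deriv f) (Ioi 0) ∧ IntegrableOn (deriv f) (Ioo 0 1)

/-- Hypothesis (f3): `f s ≥ f' s * (s - β)` for `s ≥ β`. -/
def Hf3 (f : ℝ → ℝ) (β : ℝ) : Prop := ∀ s, β ≤ s → deriv f s * (s - β) ≤ f s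

/-- Hypothesis (f4): `(F/f)' s ≥ (n-2)/(2n)` for `s > β`. -/
def Hf4 (n : ℕ) (f : ℝ → ℝ) (β : ℝ) : Prop :=
  ∀ s, β < s → ((n : ℝ) - 2) / (2 * (n : ℝ)) ≤ deriv (fun t => Fint f t / f t) s

/-- Hypothesis (f4'): `(F/f)' s ≥ (n-2)/2` for `s > β`. -/
def Hf4' (n : ℕ) (f : ℝ → ℝ) (β : ℝ) : Prop :=
  ∀ s, β < s → ((n : ℝ) - 2) / 2 ≤ deriv (fun t => Fint f t / f t) s

/-- Hypothesis (f5): `s ↦ s f' s / f s` is nonincreasing on `[β,∞)`. -/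
def Hf5 (f : ℝ → ℝ) (β : ℝ) : Prop := AntitoneOn (fun s => s * deriv f s / f s) (Ici β)

/-- Hypothesis (f6): `β f' β / f β ≤ n/(n-2)`. -/
def Hf6 (n : ℕ) (f : ℝ → ℝ) (β : ℝ) : Prop := β * deriv f β / f β ≤ (n : ℝ) / ((n : ℝ) - 2)

/-- Hypothesis (f1'): `f 0 = 0` and `s f s > 0` for `s > 0`. -/
def Hf1' (f : ℝ → ℝ) : Prop := f 0 = 0 ∧ ∀ s : ℝ, 0 < s → 0 < s * f s

/-- Hypothesis (f3'): `f s ≥ s f' s` for `s > 0`, with strict inequality at points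
arbitrarily close to `0`. -/
def Hf3' (f : ℝ → ℝ) : Prop :=
  (∀ s : ℝ, 0 < s → s * deriv f s ≤ f s) ∧
    ∀ ε : ℝ, 0 < ε → ∃ s ∈ Ioo (0:ℝ) ε, s * deriv f s < f s

/-- `v` is a C² solution of (E) on `(0,∞)`, continuous on `[0,∞)`,
with `v 0 = α` and `v' 0 = 0`. -/
def IVPsol (n : ℕ) (f : ℝ → ℝ) (α : ℝ) (v : ℝ → ℝ) : Prop :=
  v 0 = α ∧ deriv v 0 = 0 ∧ ContinuousOn v (Ici 0) ∧
    (∀ r : ℝ, 0 < r → DifferentiableAt ℝ v r ∧ DifferentiableAt ℝ (deriv v) r) ∧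
    (∀ r : ℝ, 0 < r → deriv (deriv v) r + ((n : ℝ) - 1) / r * deriv v r + f (v r) = 0)

/-- The family `α ↦ u α` of solutions of the IVP, with `u α r` and `u' α r`
continuous in `(α, r)`. -/
def Family (n : ℕ) (f : ℝ → ℝ) (u : ℝ → ℝ → ℝ) : Prop :=
  (∀ α : ℝ, 0 < α → IVPsol n f α (u α)) ∧
    ContinuousOn (fun p : ℝ × ℝ => u p.1 p.2) (Ioi 0 ×ˢ Ici 0) ∧
    ContinuousOn (fun p : ℝ × ℝ => deriv (u p.1) p.2) (Ioi 0 ×ˢ Ici 0)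

/-- The set whose supremum is `Z_k α`, given `T = T_{k-1} α`. -/
def ZsetAux (u : ℝ → ℝ → ℝ) (k : ℕ) (T α : ℝ) : Set ℝ :=
  {r | T < r ∧ ∀ s ∈ Ioo T r, (-1 : ℝ) ^ k * u α s < 0 ∧ 0 < (-1 : ℝ) ^ k * deriv (u α) s}

/-- The pair `(Z_k, T_k)`, with `T₀ = 0`;
`Z_k α = sup {r > T_{k-1} α | (-1)^k u < 0, (-1)^k u' > 0 on (T_{k-1} α, r)}` and
`T_k α = inf {r > Z_k α | u'(r, α) = 0}`. -/
def ZT (u : ℝ → ℝ → ℝ) : ℕ → (ℝ → ℝ) × (ℝ → ℝ)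
  | 0 => (fun _ => 0, fun _ => 0)
  | k + 1 =>
    let Z : ℝ → ℝ := fun α => sSup (ZsetAux u (k + 1) ((ZT u k).2 α) α)
    (Z, fun α => sInf {r | Z α < r ∧ deriv (u α) r = 0})

/-- `Z_k α` (as a real number; the genuine value when the defining set is bounded above). -/
def Zk (u : ℝ → ℝ → ℝ) (k : ℕ) (α : ℝ) : ℝ := (ZT u k).1 α

/-- `T_k α`, with `T₀ = 0`. -/
def Tk (u : ℝ → ℝ → ℝ) (k : ℕ) (α : ℝ) : ℝ := (ZT u k).2 α

/-- The defining set of `Z_k α`; `Z_k α = ∞` iff this set is unbounded above. -/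
def ZsetK (u : ℝ → ℝ → ℝ) (k : ℕ) (α : ℝ) : Set ℝ := ZsetAux u k (Tk u (k - 1) α) α

open Classical in
/-- The value of `u (·, α)` at `Z_k α`, as a limit `r → ∞` when `Z_k α = ∞`. -/
def uAtZ (u : ℝ → ℝ → ℝ) (k : ℕ) (α : ℝ) : ℝ :=
  if BddAbove (ZsetK u k α) then u α (Zk u k α) else limUnder atTop (u α)

open Classical in
/-- The value of `u' (·, α)` at `Z_k α`, as a limit `r → ∞` when `Z_k α = ∞`. -/
def duAtZ (u : ℝ → ℝ → ℝ) (k : ℕ) (α : ℝ) : ℝ :=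
  if BddAbove (ZsetK u k α) then deriv (u α) (Zk u k α) else limUnder atTop (deriv (u α))

open Classical in
/-- `Z_k α` as an extended real number. -/
def ZkE (u : ℝ → ℝ → ℝ) (k : ℕ) (α : ℝ) : WithTop ℝ :=
  if BddAbove (ZsetK u k α) then (Zk u k α : WithTop ℝ) else ⊤

/-- Membership in `F̃_k` (for `α ∈ N_{k-1}`): `(-1)^k u' (r, α) < 0` for all `r > Z_{k-1} α`. -/
def Ftil (u : ℝ → ℝ → ℝ) (k : ℕ) (α : ℝ) : Prop :=
  ∀ r, Zk u (k - 1) α < r → (-1 : ℝ) ^ k * deriv (u α) r < 0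

/-- The sets `N_k` (with `N₀ := (0,∞)`). -/
def Nk (u : ℝ → ℝ → ℝ) : ℕ → Set ℝ
  | 0 => Ioi 0
  | 1 => {α | 0 < α ∧ uAtZ u 1 α = 0 ∧ duAtZ u 1 α < 0}
  | k + 2 => {α | α ∈ Nk u (k + 1) ∧ ¬Ftil u (k + 2) α ∧ uAtZ u (k + 2) α = 0 ∧
      0 < (-1 : ℝ) ^ (k + 2) * duAtZ u (k + 2) α}

/-- The sets `G_k`. -/
def Gk (u : ℝ → ℝ → ℝ) : ℕ → Set ℝ
  | 0 => ∅
  | 1 => {α | 0 < α ∧ uAtZ u 1 α = 0 ∧ duAtZ u 1 α = 0}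
  | k + 2 => {α | α ∈ Nk u (k + 1) ∧ ¬Ftil u (k + 2) α ∧ uAtZ u (k + 2) α = 0 ∧
      duAtZ u (k + 2) α = 0}

/-- The set `F̃_k` (for `k ≥ 2`). -/
def FtilSet (u : ℝ → ℝ → ℝ) (k : ℕ) : Set ℝ := {α | α ∈ Nk u (k - 1) ∧ Ftil u k α}

/-- The set `F_k` (for `k ≥ 2`). -/
def Fk (u : ℝ → ℝ → ℝ) (k : ℕ) : Set ℝ :=
  {α | α ∈ Nk u (k - 1) ∧ ¬Ftil u k α ∧ (-1 : ℝ) ^ k * uAtZ u k α < 0}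

/-- The sets `P_k`. -/
def Pk (u : ℝ → ℝ → ℝ) : ℕ → Set ℝ
  | 0 => ∅
  | 1 => {α | 0 < α ∧ 0 < uAtZ u 1 α}
  | k + 2 => FtilSet u (k + 2) ∪ Fk u (k + 2)

/-- The set of extremal points (zeros of `u' (·, α)`) in `[0, A]`. -/
def ExtSet (u : ℝ → ℝ → ℝ) (α A : ℝ) : Set ℝ := {r | r ∈ Icc 0 A ∧ deriv (u α) r = 0}

/-- The conclusion of the δ₁-lemma (Lemma 4.1): every solution with initial value in
`(α*-δ₁, α*+δ₁)` has exactly `k` extremal points in `[0, T_{k-1}(α*) + a]`, with minimum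
values `< -β` and maximum values `> β`; moreover any two such solutions intersect between
any two of their consecutive extremal points, and in `(T_{k-1}(α*), Z_k(α*))`. -/
def DeltaOneLemma (f : ℝ → ℝ) (β : ℝ) (u : ℝ → ℝ → ℝ) (k : ℕ) (αs a δ₁ : ℝ) : Prop :=
  0 < a ∧ 0 < δ₁ ∧
    (∀ α ∈ Ioo (αs - δ₁) (αs + δ₁),
      (ExtSet u α (Tk u (k - 1) αs + a)).Finite ∧
        (ExtSet u α (Tk u (k - 1) αs + a)).ncard = k ∧
        ∀ r ∈ ExtSet u α (Tk u (k - 1) αs + a),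
          (IsLocalMin (u α) r → u α r < -β) ∧ (IsLocalMax (u α) r → β < u α r)) ∧
    ∀ α₁ ∈ Ioo (αs - δ₁) (αs + δ₁), ∀ α₂ ∈ Ioo (αs - δ₁) (αs + δ₁), α₁ < α₂ →
      (∀ i : ℕ, 1 ≤ i → i ≤ k - 1 →
        ∃ t, max (Tk u (i - 1) α₁) (Tk u (i - 1) α₂) < t ∧
          t < min (Tk u i α₁) (Tk u i α₂) ∧ u α₁ t = u α₂ t) ∧
      ∃ t, Tk u (k - 1) αs < t ∧ (BddAbove (ZsetK u k αs) → t < Zk u k αs) ∧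
        u α₁ t = u α₂ t

/-- `ρ` is the inverse of the monotone branch of `v` on `[t₁, t₂]`, whose set of values
is `[m, M]`. -/
def InvBranch (v ρ : ℝ → ℝ) (t₁ t₂ m M : ℝ) : Prop :=
  (∀ s ∈ Icc m M, ρ s ∈ Icc t₁ t₂ ∧ v (ρ s) = s) ∧
    ∀ s ∈ Ioo m M, HasDerivAt ρ (1 / deriv v (ρ s)) s

/-- `ρ` inverts a decreasing branch of `v` over the value interval `[m, M]`, along which
`(v')² + 2F > 0`. -/
def DecBranchInv (f : ℝ → ℝ) (v ρ : ℝ → ℝ) (m M : ℝ) : Prop :=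
  ∀ s ∈ Icc m M, 0 ≤ ρ s ∧ v (ρ s) = s ∧ deriv v (ρ s) < 0 ∧
    HasDerivAt ρ (1 / deriv v (ρ s)) s ∧ 0 < (deriv v (ρ s)) ^ 2 + 2 * Fint f s

/-- The functional `Q(s) = -4 (F/f)(s) r/r' - r²/(r')² - 2 r² F(s) + H(s)` computed along
the branch inverse `ρ`. -/
def Qfun (f H ρ : ℝ → ℝ) (s : ℝ) : ℝ :=
  -4 * (Fint f s / f s) * (ρ s / deriv ρ s) - (ρ s) ^ 2 / (deriv ρ s) ^ 2 -
    2 * (ρ s) ^ 2 * Fint f s + H s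

/-- The functional `P(s) = -2n (F/f)(s) r^{n-1}/r' - r^n/(r')² - 2 r^n F(s)`. -/
def Pfun (n : ℕ) (f : ℝ → ℝ) (ρ : ℝ → ℝ) (s : ℝ) : ℝ :=
  -(2 * (n : ℝ)) * (Fint f s / f s) * (ρ s ^ (n - 1) / deriv ρ s) -
    ρ s ^ n / (deriv ρ s) ^ 2 - 2 * ρ s ^ n * Fint f s

/-- The functional `W(s) = r(s) √((u'(r(s)))² + 2 F(s))`. -/
def Wfun (f v ρ : ℝ → ℝ) (s : ℝ) : ℝ :=
  ρ s * Real.sqrt ((deriv v (ρ s)) ^ 2 + 2 * Fint f s)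

/-- The functional `W̃(s) = r(s)^{n-1} √((u'(r(s)))² + 2 F(s))`. -/
def Wtil (n : ℕ) (f : ℝ → ℝ) (v ρ : ℝ → ℝ) (s : ℝ) : ℝ :=
  ρ s ^ (n - 1) * Real.sqrt ((deriv v (ρ s)) ^ 2 + 2 * Fint f s)

/-- `v` changes sign at `z ∈ (0,∞)`: `v z = 0` and `v` takes both signs in every
neighborhood of `z` (within `(0,∞)`). -/
def SignChange (v : ℝ → ℝ) (z : ℝ) : Prop :=
  v z = 0 ∧ ∀ ε : ℝ, 0 < ε →
    (∃ x ∈ Ioo (z - ε) (z + ε) ∩ Ioi 0, 0 < v x) ∧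
    (∃ x ∈ Ioo (z - ε) (z + ε) ∩ Ioi 0, v x < 0)

/-- `v` has exactly `m` sign changes in `(0,∞)`. -/
def ExactSignChanges (v : ℝ → ℝ) (m : ℕ) : Prop :=
  {z | 0 < z ∧ SignChange v z}.Finite ∧ {z | 0 < z ∧ SignChange v z}.ncard = m

/-- Bound state: a C² solution of (E) on `(0,∞)` with `v' 0 = 0` and `v r → 0` as `r → ∞`. -/
def BoundState (n : ℕ) (f : ℝ → ℝ) (v : ℝ → ℝ) : Prop :=
  ContinuousOn v (Ici 0) ∧
    (∀ r : ℝ, 0 < r → DifferentiableAt ℝ v r ∧ DifferentiableAt ℝ (deriv v) r) ∧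
    (∀ r : ℝ, 0 < r → deriv (deriv v) r + ((n : ℝ) - 1) / r * deriv v r + f (v r) = 0) ∧
    deriv v 0 = 0 ∧ Tendsto v atTop (nhds 0)

/-- Solution of the Dirichlet problem on the ball of radius `R`. -/
def DirichletSol (n : ℕ) (f : ℝ → ℝ) (R : ℝ) (v : ℝ → ℝ) : Prop :=
  ContinuousOn v (Icc 0 R) ∧
    (∀ r ∈ Ioo (0:ℝ) R, DifferentiableAt ℝ v r ∧ DifferentiableAt ℝ (deriv v) r) ∧
    (∀ r ∈ Ioo (0:ℝ) R, deriv (deriv v) r + ((n : ℝ) - 1) / r * deriv v r + f (v r) = 0) ∧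
    deriv v 0 = 0 ∧ v R = 0

end
end Paper

open Paper Set Filter MeasureTheory

namespace Paper

lemma hasDerivAt_Fint {f : ℝ → ℝ} (hf : Continuous f) (s : ℝ) : HasDerivAt (Fint f) (f s) s :=
  intervalIntegral.integral_hasDerivAt_right (hf.intervalIntegrable _ _)
    (hf.stronglyMeasurableAtFilter _ _) hf.continuousAt

lemma Fint_neg {f : ℝ → ℝ} (hodd : ∀ s, f (-s) = -f s) (s : ℝ) : Fint f (-s) = Fint f s := by
  have h := intervalIntegral.integral_comp_neg (a := 0) (b := s) f
  simp only [hodd, intervalIntegral.integral_neg, neg_zero] at h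
  rw [intervalIntegral.integral_symm 0 (-s)] at h
  exact (neg_injective h).symm

lemma Fint_abs {f : ℝ → ℝ} (hodd : ∀ s, f (-s) = -f s) (s : ℝ) : Fint f |s| = Fint f s := by
  rcases abs_choice s with h | h <;> rw [h]
  exact Fint_neg hodd s

lemma antitoneOn_Fint {f : ℝ → ℝ} {b β : ℝ} (hf : Continuous f) (h1 : Hf1 f b β) :
    AntitoneOn (Fint f) (Icc 0 b) := by
  refine antitoneOn_of_deriv_nonpos (convex_Icc _ _)
    (fun s _ => (hasDerivAt_Fint hf s).continuousAt.continuousWithinAt)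
    (fun s _ => (hasDerivAt_Fint hf s).differentiableAt.differentiableWithinAt) fun s hs => ?_
  rw [(hasDerivAt_Fint hf s).deriv]
  exact h1.2.2.2.2.2.1 s (interior_subset hs)

lemma monotoneOn_Fint {f : ℝ → ℝ} {b β : ℝ} (hf : Continuous f) (h1 : Hf1 f b β) :
    MonotoneOn (Fint f) (Ici b) := by
  refine monotoneOn_of_deriv_nonneg (convex_Ici _)
    (fun s _ => (hasDerivAt_Fint hf s).continuousAt.continuousWithinAt)
    (fun s _ => (hasDerivAt_Fint hf s).differentiableAt.differentiableWithinAt) fun s hs => ?_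
  rw [(hasDerivAt_Fint hf s).deriv]
  rw [interior_Ici] at hs
  exact (h1.2.2.2.2.1 s hs).le

/-- `F` attains its minimum at `b`. -/
lemma Fint_b_le {f : ℝ → ℝ} {b β : ℝ} (hf : Continuous f) (h1 : Hf1 f b β) (s : ℝ) :
    Fint f b ≤ Fint f s := by
  rw [← Fint_abs h1.1 s]
  have hb := h1.2.2.1
  rcases le_total |s| b with h | h
  · exact antitoneOn_Fint hf h1 ⟨abs_nonneg s, h⟩ ⟨hb.le, le_rfl⟩ h
  · exact monotoneOn_Fint hf h1 self_mem_Ici h h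

lemma Fint_nonpos {f : ℝ → ℝ} {b β : ℝ} (hf : Continuous f) (h1 : Hf1 f b β) {s : ℝ}
    (hs : s ∈ Icc (-β) β) : Fint f s ≤ 0 := by
  rw [← Fint_abs h1.1 s]
  have hb := h1.2.2.1
  have hs' : |s| ≤ β := abs_le.2 hs
  rcases le_total |s| b with h | h
  · have := antitoneOn_Fint hf h1 ⟨le_rfl, hb.le⟩ ⟨abs_nonneg s, h⟩ (abs_nonneg s)
    simpa [Fint] using this
  · have := monotoneOn_Fint hf h1 h (h.trans hs') hs'
    rwa [h1.2.2.2.2.2.2.2] at this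

/-- The energy `(v')² + 2 F(v)` is nonincreasing along solutions. -/
lemma antitoneOn_energy {n : ℕ} (hn : 2 ≤ n) {f v : ℝ → ℝ} {α : ℝ} (hf : Continuous f)
    (hv : IVPsol n f α v) (hv' : ContinuousOn (deriv v) (Ici 0)) :
    AntitoneOn (fun r => deriv v r ^ 2 + 2 * Fint f (v r)) (Ici 0) := by
  obtain ⟨-, -, hc, hd, hode⟩ := hv
  have hF : Continuous (Fint f) :=
    continuous_iff_continuousAt.2 fun s => (hasDerivAt_Fint hf s).continuousAt
  have hn' : (2 : ℝ) ≤ n := by exact_mod_cast hn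
  have key : ∀ r : ℝ, 0 < r → HasDerivAt (fun r => deriv v r ^ 2 + 2 * Fint f (v r))
      (-(2 * (((n : ℝ) - 1) / r) * deriv v r ^ 2)) r := by
    intro r hr
    have h := ((hd r hr).2.hasDerivAt.pow 2).add
      (((hasDerivAt_Fint hf (v r)).comp r (hd r hr).1.hasDerivAt).const_mul 2)
    refine h.congr_deriv ?_
    have := hode r hr
    push_cast
    linear_combination (2 * deriv v r) * this
  refine antitoneOn_of_deriv_nonpos (convex_Ici 0)
    ((hv'.pow 2).add ((hF.comp_continuousOn hc).const_smul (2 : ℝ))) ?_ ?_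
  · intro r hr
    rw [interior_Ici] at hr
    exact (key r hr).differentiableAt.differentiableWithinAt
  · intro r hr
    rw [interior_Ici] at hr
    rw [(key r hr).deriv]
    have : 0 ≤ ((n : ℝ) - 1) / r := div_nonneg (by linarith) (le_of_lt hr)
    have := mul_nonneg this (sq_nonneg (deriv v r))
    linarith

/-- A solution has zero slope wherever its potential energy is at least the initial one. -/
lemma deriv_eq_zero_of_Fint_le {n : ℕ} (hn : 2 ≤ n) {f v : ℝ → ℝ} {α : ℝ} (hf : Continuous f)
    (hv : IVPsol n f α v) (hv' : ContinuousOn (deriv v) (Ici 0)) {r : ℝ} (hr : 0 ≤ r)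
    (h : Fint f α ≤ Fint f (v r)) : deriv v r = 0 := by
  have hE := antitoneOn_energy hn hf hv hv' self_mem_Ici hr hr
  simp only [hv.1, hv.2.1] at hE
  exact pow_eq_zero_iff two_ne_zero |>.1 (le_antisymm (by linarith) (sq_nonneg _))

lemma Family.continuousOn_deriv {n : ℕ} {f : ℝ → ℝ} {u : ℝ → ℝ → ℝ} (hu : Family n f u) {α : ℝ}
    (hα : 0 < α) : ContinuousOn (deriv (u α)) (Ici 0) :=
  hu.2.2.comp (f := fun r : ℝ => (α, r)) (by fun_prop) fun _ hr => ⟨hα, hr⟩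

/-- A solution starting at a height in `(0, b]` does not decrease initially. -/
lemma b_lt_of_uAtZ_one {n : ℕ} (hn : 2 ≤ n) {f : ℝ → ℝ} {b β : ℝ} (hf : Continuous f)
    (h1 : Hf1 f b β) {u : ℝ → ℝ → ℝ} (hu : Family n f u) {α : ℝ} (hα : 0 < α)
    (hZ : uAtZ u 1 α = 0) : b < α := by
  by_contra! hb
  have hempty : ZsetAux u 1 0 α = ∅ := by
    refine eq_empty_of_forall_notMem fun r hr => ?_
    obtain ⟨hr0, hr⟩ := hr
    have hsol := hu.1 α hα
    have hanti : AntitoneOn (u α) (Icc 0 (r / 2)) := by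
      refine antitoneOn_of_deriv_nonpos (convex_Icc _ _)
        (hsol.2.2.1.mono Icc_subset_Ici_self) ?_ ?_
      · intro t ht
        rw [interior_Icc] at ht
        exact (hsol.2.2.2.1 t ht.1).1.differentiableWithinAt
      · intro t ht
        rw [interior_Icc] at ht
        have := (hr t ⟨ht.1, by linarith [ht.2]⟩).2
        linarith
    have hmid := hr (r / 2) ⟨by linarith, by linarith⟩
    have hle : u α (r / 2) ≤ α := by
      have := hanti ⟨le_rfl, by linarith⟩ ⟨by linarith, le_rfl⟩ (by linarith : (0 : ℝ) ≤ r / 2)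
      rwa [hsol.1] at this
    have hpos : 0 < u α (r / 2) := by linarith [hmid.1]
    have h0 := deriv_eq_zero_of_Fint_le hn hf hsol (hu.continuousOn_deriv hα)
      (by linarith : (0 : ℝ) ≤ r / 2)
      (antitoneOn_Fint hf h1 ⟨hpos.le, hle.trans hb⟩ ⟨hα.le, hb⟩ hle)
    linarith [hmid.2]
  have hK : ZsetK u 1 α = ∅ := hempty
  have hZ0 : Zk u 1 α = 0 := by
    change sSup (ZsetAux u 1 0 α) = 0
    rw [hempty, Real.sSup_empty]
  rw [uAtZ, hK, if_pos bddAbove_empty, hZ0, (hu.1 α hα).1] at hZ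
  exact hα.ne' hZ

lemma pos_and_uAtZ_one_of_mem_Nk (u : ℝ → ℝ → ℝ) (k : ℕ) {α : ℝ} (h : α ∈ Nk u (k + 1)) :
    0 < α ∧ uAtZ u 1 α = 0 := by
  induction k with
  | zero => exact ⟨h.1, h.2.1⟩
  | succ k ih => exact ih h.1

lemma pos_and_uAtZ_one_of_mem_Gk (u : ℝ → ℝ → ℝ) (k : ℕ) {α : ℝ} (h : α ∈ Gk u k) :
    0 < α ∧ uAtZ u 1 α = 0 := by
  match k, h with
  | 1, h => exact ⟨h.1, h.2.1⟩
  | k + 2, h => exact pos_and_uAtZ_one_of_mem_Nk u k h.1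

/-- The interval of the δ₁-lemma stays to the right of `b`, because the solution starting at
`b` is constant. -/
lemma b_le_of_DeltaOneLemma {n : ℕ} (hn : 2 ≤ n) {f : ℝ → ℝ} {b β : ℝ} (hf : Continuous f)
    (h1 : Hf1 f b β) {u : ℝ → ℝ → ℝ} (hu : Family n f u) {k : ℕ} (hk : 1 ≤ k) {αs a δ₁ : ℝ}
    (hαs : αs ∈ Gk u k) (hδ₁ : DeltaOneLemma f β u k αs a δ₁) : b ≤ αs - δ₁ := by
  by_contra! hlt
  have hb := h1.2.2.1
  obtain ⟨hpos, hZ⟩ := pos_and_uAtZ_one_of_mem_Gk u k hαs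
  have hbα := b_lt_of_uAtZ_one hn hf h1 hu hpos hZ
  obtain ⟨ha, hδ, hext, -⟩ := hδ₁
  obtain ⟨hfin, hcard, -⟩ := hext b ⟨hlt, by linarith⟩
  have hset : ExtSet u b (Tk u (k - 1) αs + a) = Icc 0 (Tk u (k - 1) αs + a) := by
    refine Subset.antisymm (fun r hr => hr.1) fun r hr => ⟨hr, ?_⟩
    exact deriv_eq_zero_of_Fint_le hn hf (hu.1 b hb) (hu.continuousOn_deriv hb) hr.1
      (Fint_b_le hf h1 _)
  rw [hset] at hfin hcard
  have hA : Tk u (k - 1) αs + a ≤ 0 := by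
    by_contra! hA
    exact Icc_infinite hA hfin
  have hsub : Icc 0 (Tk u (k - 1) αs + a) ⊆ {0} := fun x hx => le_antisymm (hx.2.trans hA) hx.1
  have hle := ncard_le_ncard hsub
  rw [hcard, ncard_singleton] at hle
  obtain rfl : k = 1 := le_antisymm hle hk
  have hT : Tk u (1 - 1) αs = 0 := rfl
  linarith

lemma DecBranchInv.pos {n : ℕ} {f v ρ : ℝ → ℝ} {α m M s : ℝ} (hv : IVPsol n f α v)
    (hρ : DecBranchInv f v ρ m M) (hs : s ∈ Icc m M) : 0 < ρ s := by
  obtain ⟨h0, -, hneg, -⟩ := hρ s hs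
  refine h0.lt_of_ne fun h => ?_
  rw [← h, hv.2.1] at hneg
  exact lt_irrefl _ hneg

lemma DecBranchInv.hasDerivAt_energy {n : ℕ} {f v ρ : ℝ → ℝ} {α m M s : ℝ} (hf : Continuous f)
    (hv : IVPsol n f α v) (hρ : DecBranchInv f v ρ m M) (hs : s ∈ Icc m M) :
    HasDerivAt (fun t => deriv v (ρ t) ^ 2 + 2 * Fint f t)
      (-(2 * ((n : ℝ) - 1) * deriv v (ρ s) / ρ s)) s := by
  have hr := hρ.pos hv hs
  obtain ⟨-, hvs, hneg, hd, -⟩ := hρ s hs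
  have h := (((hv.2.2.2.1 _ hr).2.hasDerivAt.comp s hd).pow 2).add
    ((hasDerivAt_Fint hf s).const_mul 2)
  refine h.congr_deriv ?_
  have hode := hv.2.2.2.2 _ hr
  rw [hvs] at hode
  have hne := hneg.ne
  have : deriv (deriv v) (ρ s) = -(((n : ℝ) - 1) / ρ s * deriv v (ρ s)) - f s := by linarith
  simp only [Function.comp_apply, this]
  field_simp
  push_cast
  ring

/-- `W' = (n-1) q/S - S/q`, where `q = |v'|` and `S = √((v')² + 2F)`. -/
lemma DecBranchInv.hasDerivAt_Wfun {n : ℕ} {f v ρ : ℝ → ℝ} {α m M s : ℝ} (hf : Continuous f)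
    (hv : IVPsol n f α v) (hρ : DecBranchInv f v ρ m M) (hs : s ∈ Icc m M) :
    HasDerivAt (Wfun f v ρ)
      (((n : ℝ) - 1) * (-deriv v (ρ s) / √(deriv v (ρ s) ^ 2 + 2 * Fint f s)) -
        √(deriv v (ρ s) ^ 2 + 2 * Fint f s) / -deriv v (ρ s)) s := by
  have hr := hρ.pos hv hs
  have hE := hρ.hasDerivAt_energy hf hv hs
  obtain ⟨-, -, hneg, hd, hpos⟩ := hρ s hs
  have h := hd.mul (hE.sqrt hpos.ne')
  refine h.congr_deriv ?_
  have hS := Real.sqrt_pos.2 hpos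
  have hne := hneg.ne
  field_simp
  ring

/-- At a common value `s` with `F(s) ≤ 0`, a smaller `√((v')² + 2F)` means a smaller slope. -/
lemma slope_compare {F p q S T : ℝ} (hF : F ≤ 0) (hp : 0 < p) (hq : 0 < q) (hS : 0 < S)
    (hSp : S ^ 2 = p ^ 2 + 2 * F) (hTq : T ^ 2 = q ^ 2 + 2 * F) (hST : S < T) :
    p < q ∧ q / T ≤ p / S ∧ S / p ≤ T / q := by
  have hT := hS.trans hST
  have hsq : S ^ 2 < T ^ 2 := pow_lt_pow_left₀ hST hS.le two_ne_zero
  have hpq : p < q := lt_of_pow_lt_pow_left₀ 2 hq.le (by linarith)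
  have hmul : S * q ≤ T * p := by
    refine le_of_sq_le_sq ?_ (by positivity)
    nlinarith
  refine ⟨hpq, ?_, ?_⟩
  · rw [div_le_div_iff₀ hT hS]; linarith
  · rw [div_le_div_iff₀ hp hq]; linarith

/-- As long as `√((v₁')² + 2F) < √((v₂')² + 2F)` on `(c, U]`, the gap `ρ₁ - ρ₂` is strictly
decreasing and `W₁ - W₂` is nondecreasing on `[c, U]`. -/
lemma monotonicity_of_sqrt_energy_lt {n : ℕ} (hn : 2 ≤ n) {f v₁ v₂ ρ₁ ρ₂ : ℝ → ℝ}
    {α₁ α₂ m M c U : ℝ} (hf : Continuous f) (hF : ∀ s ∈ Icc m M, Fint f s ≤ 0)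
    (hv₁ : IVPsol n f α₁ v₁) (hv₂ : IVPsol n f α₂ v₂) (hρ₁ : DecBranchInv f v₁ ρ₁ m M)
    (hρ₂ : DecBranchInv f v₂ ρ₂ m M) (hcU : Icc c U ⊆ Icc m M)
    (hlt : ∀ s ∈ Ioo c U, √(deriv v₁ (ρ₁ s) ^ 2 + 2 * Fint f s) <
      √(deriv v₂ (ρ₂ s) ^ 2 + 2 * Fint f s)) :
    StrictAntiOn (fun s => ρ₁ s - ρ₂ s) (Icc c U) ∧
      MonotoneOn (fun s => Wfun f v₁ ρ₁ s - Wfun f v₂ ρ₂ s) (Icc c U) := by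
  have hn' : (2 : ℝ) ≤ n := by exact_mod_cast hn
  have hD : ∀ s ∈ Icc c U, HasDerivAt (fun s => ρ₁ s - ρ₂ s) _ s := fun s hs =>
    (hρ₁ s (hcU hs)).2.2.2.1.sub (hρ₂ s (hcU hs)).2.2.2.1
  have hW : ∀ s ∈ Icc c U, HasDerivAt (fun s => Wfun f v₁ ρ₁ s - Wfun f v₂ ρ₂ s) _ s :=
    fun s hs => (hρ₁.hasDerivAt_Wfun hf hv₁ (hcU hs)).sub (hρ₂.hasDerivAt_Wfun hf hv₂ (hcU hs))
  have hcmp : ∀ s ∈ Ioo c U, _ := fun s hs =>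
    have h₁ := hρ₁ s (hcU (Ioo_subset_Icc_self hs))
    have h₂ := hρ₂ s (hcU (Ioo_subset_Icc_self hs))
    slope_compare (hF s (hcU (Ioo_subset_Icc_self hs))) (neg_pos.2 h₁.2.2.1) (neg_pos.2 h₂.2.2.1)
      (Real.sqrt_pos.2 h₁.2.2.2.2) (by rw [Real.sq_sqrt h₁.2.2.2.2.le, neg_sq])
      (by rw [Real.sq_sqrt h₂.2.2.2.2.le, neg_sq]) (hlt s hs)
  constructor
  · refine strictAntiOn_of_deriv_neg (convex_Icc c U)
      (fun s hs => (hD s hs).continuousAt.continuousWithinAt) fun s hs => ?_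
    rw [interior_Icc] at hs
    rw [(hD s (Ioo_subset_Icc_self hs)).deriv]
    have hneg := (hρ₁ s (hcU (Ioo_subset_Icc_self hs))).2.2.1
    have := one_div_lt_one_div_of_lt (neg_pos.2 hneg) (hcmp s hs).1
    rw [one_div_neg_eq_neg_one_div, one_div_neg_eq_neg_one_div] at this
    linarith
  · refine monotoneOn_of_deriv_nonneg (convex_Icc c U)
      (fun s hs => (hW s hs).continuousAt.continuousWithinAt)
      (fun s hs => (hW s (interior_subset hs)).differentiableAt.differentiableWithinAt)
      fun s hs => ?_
    rw [interior_Icc] at hs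
    rw [(hW s (Ioo_subset_Icc_self hs)).deriv]
    obtain ⟨-, h₁, h₂⟩ := hcmp s hs
    have := mul_le_mul_of_nonneg_left h₁ (by linarith : (0 : ℝ) ≤ n - 1)
    linarith

end Paper

/-- **Lemma 4.3.** Under (f1), (f2): separation lemma for the functional `W` on a
decreasing branch covering `[-β, β]`. -/
theorem W_separation
    (n : ℕ) (hn : 2 ≤ n)
    (f : ℝ → ℝ) (b β : ℝ) (hf : Continuous f)
    (h1 : Hf1 f b β) (h2 : Hf2 f)
    (u : ℝ → ℝ → ℝ) (hu : Family n f u)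
    (k : ℕ) (hk : 1 ≤ k) (αs : ℝ) (hαs : αs ∈ Gk u k)
    (a δ₁ : ℝ) (hδ₁ : DeltaOneLemma f β u k αs a δ₁)
    (α₁ : ℝ) (hα₁ : α₁ ∈ Ioo (αs - δ₁) (αs + δ₁))
    (α₂ : ℝ) (hα₂ : α₂ ∈ Ioo (αs - δ₁) (αs + δ₁)) (h12 : α₁ < α₂)
    (ρ₁ ρ₂ : ℝ → ℝ)
    (hρ₁ : DecBranchInv f (u α₁) ρ₁ (-β) β)
    (hρ₂ : DecBranchInv f (u α₂) ρ₂ (-β) β)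
    (U : ℝ) (hU : U ∈ Icc (-β) β)
    (hrU : ρ₂ U ≤ ρ₁ U)
    (hWU : Wfun f (u α₁) ρ₁ U < Wfun f (u α₂) ρ₂ U) :
    ∀ s ∈ Ico (-β) U, ρ₂ s < ρ₁ s ∧ Wfun f (u α₁) ρ₁ s < Wfun f (u α₂) ρ₂ s := by
  have hb := b_le_of_DeltaOneLemma hn hf h1 hu hk hαs hδ₁
  have hb0 := h1.2.2.1
  have hv₁ := hu.1 α₁ (by linarith [hα₁.1])
  have hv₂ := hu.1 α₂ (by linarith [hα₂.1])
  have hF : ∀ s ∈ Icc (-β) β, Fint f s ≤ 0 := fun s hs => Fint_nonpos hf h1 hs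
  set S₁ : ℝ → ℝ := fun s => √(deriv (u α₁) (ρ₁ s) ^ 2 + 2 * Fint f s) with hS₁
  set S₂ : ℝ → ℝ := fun s => √(deriv (u α₂) (ρ₂ s) ^ 2 + 2 * Fint f s) with hS₂
  have hsub : Icc (-β) U ⊆ Icc (-β) β := Icc_subset_Icc_right hU.2
  have hstep : ∀ s ∈ Icc (-β) U, ρ₂ s ≤ ρ₁ s →
      Wfun f (u α₁) ρ₁ s < Wfun f (u α₂) ρ₂ s → S₁ s < S₂ s := by
    intro s hs hle hW
    by_contra! hge
    exact hW.not_ge (mul_le_mul hle hge (Real.sqrt_nonneg _) (hρ₁.pos hv₁ (hsub hs)).le)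
  have hlt : ∀ s ∈ Icc (-β) U, S₁ s < S₂ s := by
    by_contra! hex
    set B : Set ℝ := {s ∈ Icc (-β) U | S₂ s ≤ S₁ s}
    have hBne : B.Nonempty := hex
    have hBbdd : BddAbove B := ⟨U, fun s hs => hs.1.2⟩
    have hBclosed : IsClosed B := isClosed_Icc.isClosed_le
      (fun s hs => (hρ₂.hasDerivAt_energy hf hv₂ (hsub hs)).continuousAt.sqrt.continuousWithinAt)
      (fun s hs => (hρ₁.hasDerivAt_energy hf hv₁ (hsub hs)).continuousAt.sqrt.continuousWithinAt)
    obtain ⟨hc, hcge⟩ : sSup B ∈ B := hBclosed.csSup_mem hBne hBbdd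
    obtain ⟨hD, hW⟩ := monotonicity_of_sqrt_energy_lt (c := sSup B) (U := U) hn hf hF hv₁ hv₂ hρ₁
      hρ₂ ((Icc_subset_Icc_left hc.1).trans hsub) fun s hs => by
        by_contra! hge
        exact hs.1.not_ge (le_csSup hBbdd ⟨⟨hc.1.trans hs.1.le, hs.2.le⟩, hge⟩)
    have hDc := hD.antitoneOn ⟨le_rfl, hc.2⟩ ⟨hc.2, le_rfl⟩ hc.2
    have hWc := hW ⟨le_rfl, hc.2⟩ ⟨hc.2, le_rfl⟩ hc.2
    simp only at hDc hWc
    exact (hstep _ hc (by linarith) (by linarith)).not_ge hcge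
  obtain ⟨hD, hW⟩ := monotonicity_of_sqrt_energy_lt hn hf hF hv₁ hv₂ hρ₁ hρ₂ hsub
    fun s hs => hlt s (Ioo_subset_Icc_self hs)
  intro s hs
  have hDs := hD ⟨hs.1, hs.2.le⟩ ⟨hU.1, le_rfl⟩ hs.2
  have hWs := hW ⟨hs.1, hs.2.le⟩ ⟨hU.1, le_rfl⟩ hs.2.le
  simp only at hDs hWs
  exact ⟨by linarith, by linarith⟩
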